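/- Let (X, Y, Z) be jointly Gaussian random vectors, all with values in ℝ^d and mean zero, and let P = diag(ρ_1, …, ρ_d) be a diagonal d×d real matrix. Suppose Cov(Y) is invertible, Z is conditionally independent of X given Y, and Cov(Z, Y) = P·Cov(Y, Y). Let I = {i_1, …, i_m} be a nonempty subset of {1, …, d} such that the covariance matrix Cov(Y_I) of the sub-vector Y_I = (Y_{i_1}, …, Y_{i_m}) is invertible. Then Z_I is conditionally independent of X_I given Y_I. -/

import Mathlib

open MeasureTheory ProbabilityTheory

/-- The cross-covariance matrix of two random vectors: entry `(i, j)` is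
`E[Xᵢ Yⱼ] − E[Xᵢ] E[Yⱼ]`. -/
noncomputable def covM {Ω : Type*} [MeasurableSpace Ω] (μ : Measure Ω)
    {ι κ : Type*} (X : Ω → ι → ℝ) (Y : Ω → κ → ℝ) : Matrix ι κ ℝ :=
  Matrix.of fun i j =>
    (∫ ω, X ω i * Y ω j ∂μ) - (∫ ω, X ω i ∂μ) * (∫ ω, Y ω j ∂μ)

/-- A random vector (indexed by a finite type) is (jointly) Gaussian if every linear
combination of its components has a Gaussian distribution on `ℝ`. -/
def IsGaussianVec {Ω : Type*} [MeasurableSpace Ω] (μ : Measure Ω)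
    {ι : Type*} [Fintype ι] (X : Ω → ι → ℝ) : Prop :=
  ∀ u : ι → ℝ, ∃ (a : ℝ) (s : NNReal),
    Measure.map (fun ω => ∑ i, u i * X ω i) μ = gaussianReal a s

/-!
The residual `W = Z - P Y` is uncorrelated with `Y`, hence independent of it by joint Gaussianity.
As a function of `(Z, Y)`, it is also conditionally independent of `X` given `Y`, and these two
facts together say that `W` is independent of the pair `(Y, X)`. Now restrict to `I`: since `P` is
diagonal, `Z_I = W_I + P_I Y_I` where `W_I` is independent of `(Y, X)`, so that given `Y_I` the
vector `Z_I` depends on nothing else about `(Y, X)`.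
-/

section CondIndepFun

variable {Ω α β γ δ : Type*} {m mΩ : MeasurableSpace Ω} [MeasurableSpace α] [MeasurableSpace β]
  [MeasurableSpace γ] [MeasurableSpace δ] {μ : Measure Ω} {f : Ω → β} {g : Ω → δ} {k : Ω → γ}

theorem condExp_indicator_one_inter [IsFiniteMeasure μ] {s t : Set Ω}
    (hs : MeasurableSet[m] s) (ht : MeasurableSet t) :
    μ⟦s ∩ t | m⟧ =ᵐ[μ] s.indicator (μ⟦t | m⟧) := by
  rw [← Set.indicator_indicator]
  exact condExp_indicator ((integrable_const 1).indicator ht) hs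

theorem condIndepFun_prodMk_left [StandardBorelSpace Ω] [IsFiniteMeasure μ] {hm : m ≤ mΩ}
    (h : CondIndepFun m hm f g μ) (hf : Measurable f)
    (hg : Measurable g) (hk : Measurable[m] k) :
    CondIndepFun m hm (fun ω => (f ω, k ω)) g μ := by
  have hfk : Measurable fun ω => (f ω, k ω) := hf.prodMk (hk.mono hm le_rfl)
  refine CondIndepSets.condIndep hfk.comap_le hg.comap_le
    (isPiSystem_prod.comap fun ω => (f ω, k ω))
    (@MeasurableSpace.isPiSystem_measurableSet _ (.comap g inferInstance))
    (by rw [← generateFrom_prod, MeasurableSpace.comap_generateFrom]; rfl)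
    (@MeasurableSpace.generateFrom_measurableSet _ (.comap g inferInstance)).symm ?_
  refine (condIndepSets_iff _ _ _ _ ?_ (fun t ht => hg.comap_le t ht) μ).2 ?_
  · rintro _ ⟨_, ⟨s, hs, u, hu, rfl⟩, rfl⟩
    exact hfk (hs.prod hu)
  rintro _ _ ⟨_, ⟨s, hs, u, hu, rfl⟩, rfl⟩ ⟨t, ht, rfl⟩
  have hfg := (condIndepFun_iff_condExp_inter_preimage_eq_mul hf hg).1 h s t hs ht
  have hrect : (fun ω => (f ω, k ω)) ⁻¹' s ×ˢ u = k ⁻¹' u ∩ f ⁻¹' s := by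
    rw [Set.mk_preimage_prod, Set.inter_comm]
  rw [hrect, Set.inter_assoc]
  filter_upwards [hfg, condExp_indicator_one_inter (hk hu) (hf hs),
    condExp_indicator_one_inter (hk hu) ((hf hs).inter (hg ht))] with ω h_mul h_f h_fg
  rw [Pi.mul_apply, h_fg, h_f]
  by_cases hω : ω ∈ k ⁻¹' u
  · simpa only [Set.indicator_of_mem hω] using h_mul
  · simp only [Set.indicator_of_notMem hω, zero_mul]

theorem condIndepFun_comp_prodMk_left [StandardBorelSpace Ω] [IsFiniteMeasure μ] {φ : β × γ → α}
    (hk : Measurable k) (h : f ⟂ᵢ[k, hk; μ] g) (hf : Measurable f) (hg : Measurable g)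
    (hφ : Measurable φ) :
    (fun ω => φ (f ω, k ω)) ⟂ᵢ[k, hk; μ] g :=
  (condIndepFun_prodMk_left h hf hg (comap_measurable k)).comp hφ measurable_id

theorem indepFun_iff_condDistrib_ae_eq_const [IsFiniteMeasure μ] [StandardBorelSpace β]
    [Nonempty β] (hf : Measurable f) (hk : Measurable k) :
    IndepFun f k μ ↔ condDistrib f k μ =ᵐ[μ.map k] Kernel.const γ (μ.map f) := by
  rw [condDistrib_ae_eq_iff_measure_eq_compProd _ hf.aemeasurable, Measure.compProd_const,
    ← indepFun_iff_map_prod_eq_prod_map_map hk.aemeasurable hf.aemeasurable]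
  exact ⟨IndepFun.symm, IndepFun.symm⟩

theorem condIndepFun_iff_indepFun_prodMk [StandardBorelSpace Ω] [IsProbabilityMeasure μ]
    [StandardBorelSpace β] [StandardBorelSpace δ] (h : IndepFun f k μ) (hf : Measurable f)
    (hg : Measurable g) (hk : Measurable k) :
    f ⟂ᵢ[k, hk; μ] g ↔ IndepFun f (fun ω => (k ω, g ω)) μ := by
  have : Nonempty Ω := nonempty_of_isProbabilityMeasure μ
  have : Nonempty β := this.map f
  have : Nonempty δ := ‹Nonempty Ω›.map g
  have hconst : (condDistrib f k μ).prodMkRight δ =ᵐ[μ.map fun ω => (k ω, g ω)]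
      Kernel.const (γ × δ) (μ.map f) := by
    have hmap : μ.map k = (μ.map fun ω => (k ω, g ω)).map Prod.fst :=
      (Measure.map_map measurable_fst (hk.prodMk hg)).symm
    have hfk := (indepFun_iff_condDistrib_ae_eq_const hf hk).1 h
    rw [hmap] at hfk
    exact ae_of_ae_map measurable_fst.aemeasurable hfk
  rw [show f ⟂ᵢ[k, hk; μ] g ↔ g ⟂ᵢ[k, hk; μ] f from ⟨CondIndepFun.symm, CondIndepFun.symm⟩,
    condIndepFun_iff_condDistrib_prod_ae_eq_prodMkRight hf hg hk,
    indepFun_iff_condDistrib_ae_eq_const hf (hk.prodMk hg)]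
  exact ⟨fun h' => h'.trans hconst, fun h' => h'.trans hconst.symm⟩

end CondIndepFun

section Gaussian

variable {Ω ι κ : Type*} [MeasurableSpace Ω] {μ : Measure Ω}

theorem IsGaussianVec.hasGaussianLaw [Fintype ι] {X : Ω → ι → ℝ} (h : IsGaussianVec μ X)
    (hX : Measurable X) : HasGaussianLaw X μ where
  isGaussian_map := by
    classical
    refine isGaussian_of_map_eq_gaussianReal fun L => ?_
    obtain ⟨a, s, has⟩ := h fun i => L (Pi.single i 1)
    refine ⟨a, s, ?_⟩
    rw [Measure.map_map L.measurable hX, ← has]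
    congr with ω
    calc L (X ω) = L (∑ i, X ω i • Pi.single i 1) := by
          rw [← pi_eq_sum_univ' (X ω)]
      _ = ∑ i, L (Pi.single i 1) * X ω i := by simp only [map_sum, map_smul, smul_eq_mul, mul_comm]

theorem covM_apply_eq_covariance [IsProbabilityMeasure μ] {X : Ω → ι → ℝ} {Y : Ω → κ → ℝ} {i : ι}
    {j : κ} (hX : MemLp (fun ω => X ω i) 2 μ) (hY : MemLp (fun ω => Y ω j) 2 μ) :
    covM μ X Y i j = cov[fun ω => X ω i, fun ω => Y ω j; μ] :=
  (covariance_eq_sub hX hY).symm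

open scoped Matrix in
theorem indepFun_sub_mulVec_of_covM_eq_mul [Finite ι] [Fintype κ] {Z : Ω → ι → ℝ}
    {Y : Ω → κ → ℝ} {P : Matrix ι κ ℝ} (hZY : HasGaussianLaw (fun ω => (Z ω, Y ω)) μ)
    (hcov : covM μ Z Y = P * covM μ Y Y) :
    IndepFun (fun ω => Z ω - P *ᵥ Y ω) Y μ := by
  have := hZY.isProbabilityMeasure
  have := Fintype.ofFinite ι
  have hZ (i : ι) : MemLp (fun ω => Z ω i) 2 μ := (hZY.fst.eval i).memLp_two
  have hY (j : κ) : MemLp (fun ω => Y ω j) 2 μ := (hZY.snd.eval j).memLp_two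
  have hPY (i : ι) (j : κ) : MemLp (fun ω => P i j * Y ω j) 2 μ := (hY j).const_mul _
  have hWY : HasGaussianLaw (fun ω => (Z ω - P *ᵥ Y ω, Y ω)) μ :=
    hZY.map_fun ((ContinuousLinearMap.fst ℝ _ _ -
      P.mulVecLin.toContinuousLinearMap.comp (ContinuousLinearMap.snd ℝ _ _)).prod
        (ContinuousLinearMap.snd ℝ _ _))
  refine HasGaussianLaw.indepFun_of_covariance_eval (X := fun i ω => (Z ω - P *ᵥ Y ω) i)
    (Y := fun j ω => Y ω j) hWY fun i j => ?_
  calc cov[fun ω => Z ω i - ∑ l, P i l * Y ω l, fun ω => Y ω j; μ]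
      = cov[fun ω => Z ω i, fun ω => Y ω j; μ]
        - ∑ l, P i l * cov[fun ω => Y ω l, fun ω => Y ω j; μ] := by
        rw [covariance_fun_sub_left (hZ i) (memLp_finsetSum _ fun l _ => hPY i l) (hY j),
          covariance_fun_sum_left (hPY i) (hY j)]
        simp only [covariance_const_mul_left]
    _ = covM μ Z Y i j - (P * covM μ Y Y) i j := by
        simp only [Matrix.mul_apply, covM_apply_eq_covariance, hZ, hY]
    _ = 0 := by rw [hcov, sub_self]

end Gaussian

theorem gaussian_switch_condIndep_closed_under_margins_general
    {Ω α ι κ : Type*} [MeasurableSpace Ω] [StandardBorelSpace Ω] {Pr : Measure Ω}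
    [IsProbabilityMeasure Pr] [MeasurableSpace α] [StandardBorelSpace α] [Fintype ι]
    [DecidableEq ι] [Countable κ] {X : Ω → α} {Y Z : Ω → ι → ℝ}
    (hX : Measurable X) (hY : Measurable Y) (hZ : Measurable Z)
    (hZY : HasGaussianLaw (fun ω => (Z ω, Y ω)) Pr) {ρ : ι → ℝ}
    (hCI : Z ⟂ᵢ[Y, hY; Pr] X) (hcov : covM Pr Z Y = Matrix.diagonal ρ * covM Pr Y Y)
    (e : κ → ι) :
    (fun ω j => Z ω (e j)) ⟂ᵢ[fun ω j => Y ω (e j),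
      measurable_pi_lambda _ fun j => (measurable_pi_apply (e j)).comp hY; Pr]
      fun ω => (Y ω, X ω) := by
  let W : Ω → ι → ℝ := fun ω => Z ω - (Matrix.diagonal ρ).mulVec (Y ω)
  have hWY : IndepFun W Y Pr := indepFun_sub_mulVec_of_covM_eq_mul hZY hcov
  have hW : Measurable W := by fun_prop
  have hWX : W ⟂ᵢ[Y, hY; Pr] X :=
    condIndepFun_comp_prodMk_left hY (φ := fun p => p.1 - (Matrix.diagonal ρ).mulVec p.2) hCI hZ hX
      (by fun_prop)
  have hWYX : IndepFun W (fun ω => (Y ω, X ω)) Pr :=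
    (condIndepFun_iff_indepFun_prodMk hWY hW hX hY).1 hWX
  have hYe : Measurable fun ω j => Y ω (e j) := by fun_prop
  have hWe : Measurable fun ω j => W ω (e j) := by fun_prop
  have hWe_Ye : IndepFun (fun ω j => W ω (e j)) (fun ω => (fun j => Y ω (e j), Y ω, X ω)) Pr :=
    hWYX.comp (φ := fun (w : ι → ℝ) (j : κ) => w (e j))
      (ψ := fun p : (ι → ℝ) × α => (fun j : κ => p.1 (e j), p)) (by fun_prop) (by fun_prop)
  have hWe_cond := (condIndepFun_iff_indepFun_prodMk
    (hWe_Ye.comp measurable_id measurable_fst) hWe (hY.prodMk hX) hYe).2 hWe_Ye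
  have hZe (ω : Ω) (j : κ) : Z ω (e j) = W ω (e j) + ρ (e j) * Y ω (e j) := by
    simp only [W, Pi.sub_apply, Matrix.mulVec_diagonal, sub_add_cancel]
  simp only [hZe]
  exact condIndepFun_comp_prodMk_left hYe
    (φ := fun (p : (κ → ℝ) × (κ → ℝ)) j => p.1 j + ρ (e j) * p.2 j) hWe_cond hWe (hY.prodMk hX)
    (by fun_prop)

/-- For jointly Gaussian mean-zero random vectors `(X, Y, Z)` in `ℝ^d` with
`Cov(Y)` invertible, a diagonal matrix `P = diag(ρ)`, `Z ⟂ X | Y` and `Cov(Z,Y) = P·Cov(Y,Y)`: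
for any nonempty subset `I ⊆ {1,…,d}` (encoded by an injective `e : Fin m → Fin d`, `m ≥ 1`)
with `Cov(Y_I)` invertible, the sub-vectors satisfy `Z_I ⟂ X_I | Y_I`. -/
theorem gaussian_switch_condIndep_closed_under_margins
    {Ω : Type*} [MeasurableSpace Ω] [StandardBorelSpace Ω]
    (Pr : Measure Ω) [IsProbabilityMeasure Pr]
    {d : ℕ}
    (X Y Z : Ω → Fin d → ℝ)
    (hX : Measurable X) (hY : Measurable Y) (hZ : Measurable Z)
    (hGauss : IsGaussianVec Pr
      (fun ω => Sum.elim (Sum.elim (X ω) (Y ω)) (Z ω)))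
    (hmX : ∀ i, ∫ ω, X ω i ∂Pr = 0)
    (hmY : ∀ i, ∫ ω, Y ω i ∂Pr = 0)
    (hmZ : ∀ i, ∫ ω, Z ω i ∂Pr = 0)
    (ρ : Fin d → ℝ)
    (hYinv : IsUnit (covM Pr Y Y))
    (hCI : CondIndepFun (MeasurableSpace.comap Y inferInstance) hY.comap_le Z X Pr)
    (hcov : covM Pr Z Y = Matrix.diagonal ρ * covM Pr Y Y)
    {m : ℕ} (hm : 0 < m) (e : Fin m → Fin d) (he : Function.Injective e)
    (hYIinv : IsUnit (covM Pr (fun ω j => Y ω (e j)) (fun ω j => Y ω (e j)))) :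
    CondIndepFun
      (MeasurableSpace.comap (fun ω (j : Fin m) => Y ω (e j)) inferInstance)
      ((measurable_pi_lambda _ fun j => (measurable_pi_apply (e j)).comp hY).comap_le)
      (fun ω j => Z ω (e j)) (fun ω j => X ω (e j)) Pr := by
  have hZY : HasGaussianLaw (fun ω => (Z ω, Y ω)) Pr :=
    (hGauss.hasGaussianLaw <| measurable_pi_iff.2 <| by
      rintro ((i | i) | i) <;> simp only [Sum.elim_inl, Sum.elim_inr] <;> fun_prop).map_fun
      ((Pi.compRightL ℝ _ Sum.inr).prod
        (Pi.compRightL ℝ _ (Sum.inl ∘ Sum.inr)))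
  exact (gaussian_switch_condIndep_closed_under_margins_general hX hY hZ hZY hCI hcov e).comp
    (ψ := fun p j => p.2 (e j)) measurable_id (by fun_prop)
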